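/- There exist absolute constants 0 < c ≤ C such that for every θ ∈ (0,1) and every positive integer n, c · n^{(3-θ)/2} θ^{-1} (1-θ)^{-2} ≤ ∫_{A} G(s,t,u,v) ds dt du dv ≤ C · n^{(3-θ)/2} θ^{-1} (1-θ)^{-2}, where A = { (s,t,u,v) ∈ (0,∞)⁴ : 0 < u < 1, 0 < v < n^{-1/2}, s < u^{1/2}, t ≥ n^{1/4} u^{-1/2} s }. -/

import Mathlib

open MeasureTheory Set Real

/-- The integrand `G(s,t,u,v)` from the paper's computation of the completely 1-summing
norm of the identity `OH_n → ℓ^n_p`, with `θ = 2/p'`. Here `p = (s, t, u, v)`. -/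
noncomputable def G (θ : ℝ) (n : ℕ) (p : ℝ × ℝ × ℝ × ℝ) : ℝ :=
  (n : ℝ) ^ (2 : ℕ) * p.1 ^ (-1 - 2 * θ) * p.2.1 ^ (-1 - 2 * θ) *
    min (min (min ((n : ℝ)⁻¹ * p.1 ^ (4 : ℝ) * p.2.2.1 ^ (-2 : ℝ) * p.2.2.2 ^ (-2 : ℝ))
                  ((n : ℝ)⁻¹ * p.2.1 ^ (4 : ℝ)))
             (min (p.1 ^ (4 : ℝ) * p.2.2.1 ^ (-2 : ℝ)) (p.2.1 ^ (4 : ℝ) * p.2.2.2 ^ (-2 : ℝ))))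
        (min (min (p.2.2.1 ^ (-2 : ℝ) * p.2.2.2 ^ (-2 : ℝ)) (p.2.2.1 ^ (-2 : ℝ)))
             (min 1 (p.2.2.2 ^ (-2 : ℝ))))

/-- The region of integration. -/
def A (n : ℕ) : Set (ℝ × ℝ × ℝ × ℝ) :=
  {p | 0 < p.1 ∧ 0 < p.2.1 ∧ 0 < p.2.2.1 ∧ 0 < p.2.2.2 ∧ p.2.2.1 < 1 ∧ p.2.2.2 < (n : ℝ) ^ (-(1/2) : ℝ) ∧ p.1 < p.2.2.1 ^ ((1:ℝ)/2) ∧ (n : ℝ) ^ ((1:ℝ)/4) * p.2.2.1 ^ (-(1/2) : ℝ) * p.1 ≤ p.2.1}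

/-!
On `A` the minimum in `G` is `s⁴ u⁻²`, so `G` is there a product of powers of the variables. The
fibre of `A` over `(u, v)` is the region `0 < s < b`, `a s ≤ t` with `a = n^{1/4} u^{-1/2}` and
`b = u^{1/2}`, on which a monomial in `s` and `t` integrates to an explicit constant times powers
of `a` and `b`. The `t`- and `s`-integrals contribute `1 / (2θ)` and `1 / (4(1 - θ))`, and what
remains is `n^{2-θ/2} u^{-θ} / (8θ(1-θ))`: the `u`-integral gives the second factor `(1 - θ)⁻¹`
and the `v`-integral the factor `n^{-1/2}`. So `c = C = 1/8` works, with equality.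
-/

open scoped ENNReal

section SetLIntegral

variable {α β : Type*} [MeasurableSpace α] [MeasurableSpace β] {μ : Measure α} {ν : Measure β}
  [SFinite ν]

lemma setLIntegral_prod_of_mem_iff {S : Set (α × β)} {B : Set α} {F : α → Set β}
    (hS : MeasurableSet S) (hB : MeasurableSet B)
    (hmem : ∀ x y, (x, y) ∈ S ↔ x ∈ B ∧ y ∈ F x) {f : α × β → ℝ≥0∞} (hf : Measurable f) :
    ∫⁻ p in S, f p ∂μ.prod ν = ∫⁻ x in B, ∫⁻ y in F x, f (x, y) ∂ν ∂μ := by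
  have hfiber : ∀ x ∈ B, Prod.mk x ⁻¹' S = F x := fun x hx => by
    ext y; simp only [mem_preimage, hmem, hx, true_and]
  rw [← lintegral_indicator hS, lintegral_prod _ (hf.indicator hS).aemeasurable,
    ← lintegral_indicator hB]
  refine lintegral_congr fun x => ?_
  by_cases hx : x ∈ B
  · rw [indicator_of_mem hx, ← hfiber x hx,
      ← lintegral_indicator (measurable_prodMk_left hS)]
    rfl
  · have hzero : ∀ y, S.indicator f (x, y) = 0 := fun y =>
      indicator_of_notMem (fun h => hx ((hmem x y).1 h).1) f
    simp only [hzero, lintegral_zero, indicator_of_notMem hx]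

end SetLIntegral

lemma setLIntegral_Ioo_rpow {r b : ℝ} (hr : -1 < r) (hb : 0 ≤ b) :
    ∫⁻ s in Ioo 0 b, ENNReal.ofReal (s ^ r) = ENNReal.ofReal (b ^ (r + 1) / (r + 1)) := by
  have hint : IntegrableOn (fun s : ℝ => s ^ r) (Ioo 0 b) :=
    (intervalIntegrable_iff_integrableOn_Ioo_of_le hb).1
      (intervalIntegral.intervalIntegrable_rpow' hr)
  rw [← ofReal_integral_eq_lintegral_ofReal hint
      (ae_restrict_of_forall_mem measurableSet_Ioo fun s hs => rpow_nonneg hs.1.le r),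
    ← integral_Ioc_eq_integral_Ioo, ← intervalIntegral.integral_of_le hb,
    integral_rpow (Or.inl hr), zero_rpow (by linarith), sub_zero]

lemma setLIntegral_Ici_rpow {r a : ℝ} (hr : r < -1) (ha : 0 < a) :
    ∫⁻ t in Ici a, ENNReal.ofReal (t ^ r) = ENNReal.ofReal (a ^ (r + 1) / -(r + 1)) := by
  rw [setLIntegral_congr Ioi_ae_eq_Ici.symm,
    ← ofReal_integral_eq_lintegral_ofReal (integrableOn_Ioi_rpow_of_lt hr ha)
      (ae_restrict_of_forall_mem measurableSet_Ioi fun t ht => rpow_nonneg (ha.trans ht).le r),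
    integral_Ioi_rpow_of_lt hr ha, neg_div, div_neg]

/-- The points `(s, t)` of the plane with `0 < s < b` lying on or above the line `t = a s`. The
fibres of `A n` over fixed `(u, v)` have this shape. -/
def wedge (a b : ℝ) : Set (ℝ × ℝ) := {p | p.1 ∈ Ioo 0 b ∧ a * p.1 ≤ p.2}

lemma measurableSet_wedge (a b : ℝ) : MeasurableSet (wedge a b) :=
  (measurable_fst measurableSet_Ioo).inter
    (measurableSet_le (measurable_fst.const_mul a) measurable_snd)

lemma setLIntegral_wedge_rpow_mul_rpow {a b p q : ℝ} (ha : 0 < a) (hb : 0 ≤ b) (hq : q < -1)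
    (hpq : -2 < p + q) :
    ∫⁻ x in wedge a b, ENNReal.ofReal (x.1 ^ p * x.2 ^ q) =
      ENNReal.ofReal (a ^ (q + 1) * b ^ (p + q + 2) / (-(q + 1) * (p + q + 2))) := by
  have ht_integral : ∀ s ∈ Ioo 0 b, ∫⁻ t in Ici (a * s), ENNReal.ofReal (s ^ p * t ^ q) =
      ENNReal.ofReal (a ^ (q + 1) / -(q + 1)) * ENNReal.ofReal (s ^ (p + q + 1)) := by
    intro s hs
    have hs0 : 0 < s := hs.1
    have hs_pow : s ^ (p + q + 1) = s ^ p * s ^ (q + 1) := by rw [← rpow_add hs0, add_assoc]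
    simp_rw [ENNReal.ofReal_mul (rpow_nonneg hs0.le p)]
    rw [lintegral_const_mul _ (by fun_prop), setLIntegral_Ici_rpow hq (mul_pos ha hs0),
      ← ENNReal.ofReal_mul (by positivity),
      ← ENNReal.ofReal_mul (div_nonneg (by positivity) (by linarith)),
      mul_rpow ha.le hs0.le, hs_pow]
    congr 1
    ring
  rw [Measure.volume_eq_prod, setLIntegral_prod_of_mem_iff (F := fun s => Ici (a * s))
      (measurableSet_wedge a b) measurableSet_Ioo (fun _ _ => Iff.rfl) (by fun_prop),
    setLIntegral_congr_fun measurableSet_Ioo ht_integral, lintegral_const_mul _ (by fun_prop),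
    setLIntegral_Ioo_rpow (by linarith) hb,
    ← ENNReal.ofReal_mul (div_nonneg (by positivity) (by linarith)), div_mul_div_comm,
    add_assoc (p + q), one_add_one_eq_two]

lemma measurable_G (θ : ℝ) (n : ℕ) : Measurable (G θ n) := by
  unfold G
  fun_prop

lemma measurableSet_A (n : ℕ) : MeasurableSet (A n) := by
  unfold A
  measurability

lemma rpow_four_mul_rpow_neg_two_le_one_of_mem_A {n : ℕ} {s t u v : ℝ}
    (hp : (s, t, u, v) ∈ A n) : s ^ (4 : ℝ) * u ^ (-2 : ℝ) ≤ 1 := by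
  obtain ⟨hs, -, hu, -, -, -, hsu, -⟩ := hp
  dsimp only at hs hu hsu
  calc s ^ (4 : ℝ) * u ^ (-2 : ℝ) ≤ (u ^ ((1 : ℝ) / 2)) ^ (4 : ℝ) * u ^ (-2 : ℝ) := by gcongr
    _ = 1 := by rw [← rpow_mul hu.le, ← rpow_add hu]; norm_num

section Region

variable {n : ℕ} (hn : 0 < n)
include hn

lemma mem_A_iff {s t u v : ℝ} :
    (s, t, u, v) ∈ A n ↔ (u, v) ∈ Ioo (0 : ℝ) 1 ×ˢ Ioo (0 : ℝ) ((n : ℝ) ^ (-(1 / 2) : ℝ)) ∧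
      (s, t) ∈ wedge ((n : ℝ) ^ ((1 : ℝ) / 4) * u ^ (-(1 / 2) : ℝ)) (u ^ ((1 : ℝ) / 2)) := by
  constructor
  · rintro ⟨hs, -, hu, hv, hu1, hvn, hsu, hst⟩
    exact ⟨⟨⟨hu, hu1⟩, hv, hvn⟩, ⟨hs, hsu⟩, hst⟩
  · rintro ⟨⟨⟨hu, hu1⟩, hv, hvn⟩, ⟨hs, hsu⟩, hst⟩
    dsimp only at hu hs hst
    have ht : 0 < t := lt_of_lt_of_le (by positivity) hst
    exact ⟨hs, ht, hu, hv, hu1, hvn, hsu, hst⟩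

lemma setLIntegral_A {f : ℝ × ℝ × ℝ × ℝ → ℝ≥0∞} (hf : Measurable f) :
    ∫⁻ p in A n, f p =
      ∫⁻ w in Ioo (0 : ℝ) 1 ×ˢ Ioo (0 : ℝ) ((n : ℝ) ^ (-(1 / 2) : ℝ)),
        ∫⁻ x in wedge ((n : ℝ) ^ ((1 : ℝ) / 4) * w.1 ^ (-(1 / 2) : ℝ)) (w.1 ^ ((1 : ℝ) / 2)),
          f (x.1, x.2, w) := by
  let e : (ℝ × ℝ) × ℝ × ℝ ≃ᵐ ℝ × ℝ × ℝ × ℝ :=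
    MeasurableEquiv.prodComm.trans MeasurableEquiv.prodAssoc
  have he : MeasurePreserving e :=
    volume_preserving_prodAssoc.comp Measure.measurePreserving_swap
  rw [← he.setLIntegral_comp_preimage (measurableSet_A n) hf, Measure.volume_eq_prod (ℝ × ℝ)]
  exact setLIntegral_prod_of_mem_iff (e.measurable (measurableSet_A n))
    (measurableSet_Ioo.prod measurableSet_Ioo) (fun _ _ => mem_A_iff hn)
    (hf.comp e.measurable)

lemma rpow_four_mul_rpow_neg_two_le_of_mem_A {s t u v : ℝ} (hp : (s, t, u, v) ∈ A n) :
    s ^ (4 : ℝ) * u ^ (-2 : ℝ) ≤ (n : ℝ)⁻¹ * t ^ (4 : ℝ) := by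
  obtain ⟨hs, -, hu, -, -, -, -, hst⟩ := hp
  dsimp only at hs hu hst
  have hn0 : (0 : ℝ) < n := Nat.cast_pos.2 hn
  rw [le_inv_mul_iff₀ hn0]
  calc (n : ℝ) * (s ^ (4 : ℝ) * u ^ (-2 : ℝ))
      = ((n : ℝ) ^ ((1 : ℝ) / 4) * u ^ (-(1 / 2) : ℝ) * s) ^ (4 : ℝ) := by
        rw [mul_rpow (by positivity) hs.le, mul_rpow (by positivity) (by positivity),
          ← rpow_mul hn0.le, ← rpow_mul hu.le]
        norm_num
        ring
    _ ≤ t ^ (4 : ℝ) := by gcongr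

lemma natCast_le_rpow_neg_two_of_mem_A {s t u v : ℝ} (hp : (s, t, u, v) ∈ A n) :
    (n : ℝ) ≤ v ^ (-2 : ℝ) := by
  obtain ⟨-, -, -, hv, -, hvn, -⟩ := hp
  refine (le_rpow_inv_iff_of_neg hv (Nat.cast_pos.2 hn) (by norm_num)).1 (hvn.le.trans_eq ?_)
  norm_num

end Region

/-- The eight terms of `G`, with `N`, `S`, `T`, `U`, `V` for `n`, `s⁴`, `t⁴`, `u⁻²`, `v⁻²`. -/
lemma min_eq_mul_of_le {N S T U V : ℝ} (hN : 1 ≤ N) (hS : 0 ≤ S) (hU : 1 ≤ U)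
    (hNV : N ≤ V) (hSU : S * U ≤ 1) (hST : S * U ≤ N⁻¹ * T) :
    min (min (min (N⁻¹ * S * U * V) (N⁻¹ * T)) (min (S * U) (T * V)))
      (min (min (U * V) U) (min 1 V)) = S * U := by
  have hN0 : 0 < N := by linarith
  have hV : 1 ≤ V := hN.trans hNV
  have hSU0 : 0 ≤ S * U := mul_nonneg hS (by linarith)
  have hT : 0 ≤ T := nonneg_of_mul_nonneg_right (hSU0.trans hST) (inv_pos.2 hN0)
  have hNST : S * U ≤ N⁻¹ * S * U * V :=
    calc S * U ≤ S * U * (N⁻¹ * V) :=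
          le_mul_of_one_le_right hSU0 ((le_inv_mul_iff₀ hN0).2 (by rwa [mul_one]))
      _ = N⁻¹ * S * U * V := by ring
  have hTV : S * U ≤ T * V :=
    calc S * U ≤ N⁻¹ * T := hST
      _ ≤ T := mul_le_of_le_one_left hT (inv_le_one_of_one_le₀ hN)
      _ ≤ T * V := le_mul_of_one_le_right hT hV
  have hUV : 1 ≤ U * V := one_le_mul_of_one_le_of_one_le hU hV
  refine le_antisymm ((min_le_left _ _).trans ((min_le_right _ _).trans (min_le_left _ _))) ?_
  simp only [le_min_iff]
  exact ⟨⟨⟨hNST, hST⟩, le_rfl, hTV⟩, ⟨hSU.trans hUV, hSU.trans hU⟩, hSU, hSU.trans hV⟩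

lemma G_eq_of_mem_A {n : ℕ} (hn : 0 < n) (θ : ℝ) {s t u v : ℝ} (hp : (s, t, u, v) ∈ A n) :
    G θ n (s, t, u, v) =
      (n : ℝ) ^ 2 * u ^ (-2 : ℝ) * (s ^ (3 - 2 * θ) * t ^ (-1 - 2 * θ)) := by
  have ⟨hs, _, hu, _, hu1, _⟩ := hp
  have hU : 1 ≤ u ^ (-2 : ℝ) := one_le_rpow_of_pos_of_le_one_of_nonpos hu hu1.le (by norm_num)
  have hs_pow : s ^ (3 - 2 * θ) = s ^ (-1 - 2 * θ) * s ^ (4 : ℝ) := by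
    rw [← rpow_add hs]; ring_nf
  rw [G, min_eq_mul_of_le (Nat.one_le_cast.2 hn) (rpow_nonneg hs.le 4) hU
    (natCast_le_rpow_neg_two_of_mem_A hn hp) (rpow_four_mul_rpow_neg_two_le_one_of_mem_A hp)
    (rpow_four_mul_rpow_neg_two_le_of_mem_A hn hp), hs_pow]
  ring

section Integral

variable {θ : ℝ} (hθ0 : 0 < θ) (hθ1 : θ < 1) {n : ℕ} (hn : 0 < n)
include hθ0 hθ1 hn

lemma setLIntegral_wedge_G {u v : ℝ}
    (huv : (u, v) ∈ Ioo (0 : ℝ) 1 ×ˢ Ioo (0 : ℝ) ((n : ℝ) ^ (-(1 / 2) : ℝ))) :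
    ∫⁻ x in wedge ((n : ℝ) ^ ((1 : ℝ) / 4) * u ^ (-(1 / 2) : ℝ)) (u ^ ((1 : ℝ) / 2)),
        ENNReal.ofReal (G θ n (x.1, x.2, u, v)) =
      ENNReal.ofReal ((n : ℝ) ^ (2 - θ / 2) / (8 * θ * (1 - θ))) *
        ENNReal.ofReal (u ^ (-θ)) := by
  have hu : 0 < u := huv.1.1
  have hn0 : (0 : ℝ) < n := Nat.cast_pos.2 hn
  have h_one_sub : 0 < 1 - θ := by linarith
  have hn_pow : (n : ℝ) ^ (2 - θ / 2) = (n : ℝ) ^ 2 * (n : ℝ) ^ (1 / 4 * -(2 * θ)) := by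
    rw [← rpow_natCast, ← rpow_add hn0]; push_cast; ring_nf
  have hu_pow : u ^ (-θ) =
      u ^ (-2 : ℝ) * u ^ (-(1 / 2) * -(2 * θ)) * u ^ (1 / 2 * (4 * (1 - θ))) := by
    rw [← rpow_add hu, ← rpow_add hu]; ring_nf
  have hC : 0 ≤ (n : ℝ) ^ 2 * u ^ (-2 : ℝ) := by positivity
  have hG : ∀ x ∈ wedge ((n : ℝ) ^ ((1 : ℝ) / 4) * u ^ (-(1 / 2) : ℝ)) (u ^ ((1 : ℝ) / 2)),
      ENNReal.ofReal (G θ n (x.1, x.2, u, v)) = ENNReal.ofReal ((n : ℝ) ^ 2 * u ^ (-2 : ℝ)) *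
        ENNReal.ofReal (x.1 ^ (3 - 2 * θ) * x.2 ^ (-1 - 2 * θ)) := fun x hx => by
    rw [G_eq_of_mem_A hn θ ((mem_A_iff hn).2 ⟨huv, hx⟩), ENNReal.ofReal_mul hC]
  rw [setLIntegral_congr_fun (measurableSet_wedge _ _) hG, lintegral_const_mul _ (by fun_prop),
    setLIntegral_wedge_rpow_mul_rpow (by positivity) (by positivity) (by linarith) (by linarith),
    ← ENNReal.ofReal_mul hC, ← ENNReal.ofReal_mul (by positivity), hn_pow, hu_pow,
    show -1 - 2 * θ + 1 = -(2 * θ) by ring,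
    show 3 - 2 * θ + (-1 - 2 * θ) + 2 = 4 * (1 - θ) by ring,
    mul_rpow (by positivity) (by positivity), ← rpow_mul hn0.le, ← rpow_mul hu.le,
    ← rpow_mul hu.le]
  congr 1
  field_simp
  ring

lemma setLIntegral_A_G :
    ∫⁻ p in A n, ENNReal.ofReal (G θ n p) =
      ENNReal.ofReal ((n : ℝ) ^ ((3 - θ) / 2) / (8 * θ * (1 - θ) ^ 2)) := by
  have hn0 : (0 : ℝ) < n := Nat.cast_pos.2 hn
  have h_one_sub : 0 < 1 - θ := by linarith
  have hn_pow : (n : ℝ) ^ ((3 - θ) / 2) = (n : ℝ) ^ (2 - θ / 2) * (n : ℝ) ^ (-(1 / 2) : ℝ) := by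
    rw [← rpow_add hn0]; ring_nf
  calc ∫⁻ p in A n, ENNReal.ofReal (G θ n p)
      = ∫⁻ w in Ioo (0 : ℝ) 1 ×ˢ Ioo (0 : ℝ) ((n : ℝ) ^ (-(1 / 2) : ℝ)),
          ENNReal.ofReal ((n : ℝ) ^ (2 - θ / 2) / (8 * θ * (1 - θ))) *
            ENNReal.ofReal (w.1 ^ (-θ)) := by
        rw [setLIntegral_A hn (measurable_G θ n).ennreal_ofReal]
        exact setLIntegral_congr_fun (measurableSet_Ioo.prod measurableSet_Ioo) fun w hw =>
          setLIntegral_wedge_G hθ0 hθ1 hn hw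
    _ = ENNReal.ofReal ((n : ℝ) ^ (2 - θ / 2) / (8 * θ * (1 - θ))) *
          (ENNReal.ofReal (1 / (1 - θ)) * ENNReal.ofReal ((n : ℝ) ^ (-(1 / 2) : ℝ))) := by
        rw [lintegral_const_mul _ (by fun_prop), Measure.volume_eq_prod,
          setLIntegral_prod _ (by fun_prop)]
        simp only [setLIntegral_const, volume_Ioo, sub_zero]
        rw [lintegral_mul_const _ (by fun_prop), setLIntegral_Ioo_rpow (by linarith) zero_le_one,
          one_rpow, neg_add_eq_sub]
    _ = ENNReal.ofReal ((n : ℝ) ^ ((3 - θ) / 2) / (8 * θ * (1 - θ) ^ 2)) := by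
        rw [← ENNReal.ofReal_mul (by positivity), ← ENNReal.ofReal_mul (by positivity), hn_pow]
        congr 1
        field_simp

theorem setIntegral_A_G :
    ∫ p in A n, G θ n p = (n : ℝ) ^ ((3 - θ) / 2) / (8 * θ * (1 - θ) ^ 2) := by
  have hG_nonneg : ∀ p ∈ A n, 0 ≤ G θ n p := by
    rintro ⟨s, t, u, v⟩ hp
    have ⟨hs, ht, hu, _⟩ := hp
    dsimp only at hs ht hu
    rw [G_eq_of_mem_A hn θ hp]
    positivity
  rw [integral_eq_lintegral_of_nonneg_ae
      (ae_restrict_of_forall_mem (measurableSet_A n) hG_nonneg)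
      (measurable_G θ n).aestronglyMeasurable,
    setLIntegral_A_G hθ0 hθ1 hn, ENNReal.toReal_ofReal]
  have : 0 < 1 - θ := by linarith
  positivity

end Integral

theorem stmt_5 :
    ∃ c C : ℝ, 0 < c ∧ c ≤ C ∧ ∀ θ : ℝ, 0 < θ → θ < 1 → ∀ n : ℕ, 0 < n →
      c * ((n : ℝ) ^ ((3 - θ) / 2) * θ ^ (-1 : ℝ) * (1 - θ) ^ (-2 : ℝ)) ≤ (∫ p in A n, G θ n p) ∧
      (∫ p in A n, G θ n p) ≤ C * ((n : ℝ) ^ ((3 - θ) / 2) * θ ^ (-1 : ℝ) * (1 - θ) ^ (-2 : ℝ)) := by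
  refine ⟨1 / 8, 1 / 8, by norm_num, le_rfl, fun θ hθ0 hθ1 n hn => ?_⟩
  have hvalue : ∫ p in A n, G θ n p =
      1 / 8 * ((n : ℝ) ^ ((3 - θ) / 2) * θ ^ (-1 : ℝ) * (1 - θ) ^ (-2 : ℝ)) := by
    rw [setIntegral_A_G hθ0 hθ1 hn, rpow_neg_one, rpow_neg (sub_nonneg.2 hθ1.le), rpow_two]
    field_simp
  exact ⟨hvalue.ge, hvalue.le⟩
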